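/- The generating function of plane partitions equals the MacMahon product: Σ_{π} q^{|π|} = ∏_{n=1}^{∞} (1 − q^n)^{−n}, where the sum is over all plane partitions π and |π| is the number of boxes of π. -/

import Mathlib

/-- A plane partition: a map `π : ℕ×ℕ → ℕ` with finite support which is weakly decreasing
in both directions. -/
structure PlanePartitionFn where
  part : ℕ → ℕ → ℕ
  decr_left : ∀ i j, part (i + 1) j ≤ part i j
  decr_right : ∀ i j, part i (j + 1) ≤ part i j
  finite_supp : Set.Finite {p : ℕ × ℕ | part p.1 p.2 ≠ 0}

/-- The size `|π| = Σ_{i,j} π_{i,j}` of a plane partition. -/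
noncomputable def PlanePartitionFn.size (π : PlanePartitionFn) : ℕ :=
  π.finite_supp.toFinset.sum fun p => π.part p.1 p.2

/-- The product topology (coefficientwise convergence) on formal power series over `ℚ`:
`PowerSeries ℚ = MvPowerSeries Unit ℚ` is by definition `(Unit →₀ ℕ) → ℚ`. -/
noncomputable instance : TopologicalSpace (PowerSeries ℚ) :=
  inferInstanceAs (TopologicalSpace ((Unit →₀ ℕ) → ℚ))

/-!
Each diagonal of a plane partition is an integer partition, and neighbouring diagonals interlace.
These partitions are the boundary `λ(s, 0)`, `λ(0, t)` of a quarter-plane array `λ(s, t)` whose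
`2 × 2` blocks `κ = λ(s+1, t+1)`, `μ = λ(s+1, t)`, `ν = λ(s, t+1)`, `ρ = λ(s, t)` all obey the
piecewise-linear local rule of the Robinson–Schensted–Knuth correspondence,
`ρ (k+1) + κ k = min (μ k) (ν k) + max (μ (k+1)) (ν (k+1))`.
The rule computes `κ` from the other three corners, so the boundary determines the array. It also
computes `ρ` from the other three corners and the number `m(s, t) = ρ 0 - max (μ 0) (ν 0)`, which
is arbitrary, so the array is equally well determined by the finitely supported matrix `m`.
Summing the rule over `k` gives `|ρ| + |κ| = |μ| + |ν| + m(s, t)`: the matrix `m` is the mixed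
second difference of `|λ|`. Summation by parts then gives `|π| = ∑ (s + t + 1) m(s, t)`, and since
`n` of the pairs `(s, t)` satisfy `s + t + 1 = n`, the generating function is
`∏ (1 - q ^ n) ^ (-n)`.
-/

open Finset PowerSeries

/-- The relation `μ ≺ ρ`, i.e. `ρ 0 ≥ μ 0 ≥ ρ 1 ≥ μ 1 ≥ ⋯`: the skew shape `ρ / μ` is a horizontal
strip. Partitions are encoded as the sequences of their parts, indexed from `0`. -/
def Interlaces (μ ρ : ℕ → ℕ) : Prop :=
  ∀ k, μ k ≤ ρ k ∧ ρ (k + 1) ≤ μ k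

/-- The piecewise-linear local rule of the Robinson–Schensted–Knuth correspondence for a square of
partitions with inner corner `κ`, outer corner `ρ` and side corners `μ`, `ν`. It leaves `ρ 0`
free. -/
def IsLocalRule (κ μ ν ρ : ℕ → ℕ) : Prop :=
  ∀ k, ρ (k + 1) + κ k = min (μ k) (ν k) + max (μ (k + 1)) (ν (k + 1))

namespace IsLocalRule

variable {κ μ ν ρ : ℕ → ℕ}

lemma symm (h : IsLocalRule κ μ ν ρ) : IsLocalRule κ ν μ ρ := fun k ↦ by
  rw [h k, min_comm, max_comm]

lemma interlaces_inner (h : IsLocalRule κ μ ν ρ) (hμ : Interlaces μ ρ) (hν : Interlaces ν ρ) :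
    Interlaces κ μ := fun k ↦ by
  have := h k
  have := hμ k
  have := hν k
  have := hμ (k + 1)
  have := hν (k + 1)
  lia

lemma interlaces_outer (h : IsLocalRule κ μ ν ρ) (hμ : Interlaces κ μ) (hν : Interlaces κ ν)
    (h₀ : μ 0 ≤ ρ 0) : Interlaces μ ρ := fun k ↦ by
  have hρ : ρ (k + 1) ≤ μ k := by
    have := h k
    have := hμ k
    have := hν k
    lia
  refine ⟨?_, hρ⟩
  cases k with
  | zero => exact h₀
  | succ k =>
    have := h k
    have := hμ k
    have := hν k
    lia

lemma sum_range (h : IsLocalRule κ μ ν ρ) {m : ℕ} (h₀ : ρ 0 = max (μ 0) (ν 0) + m) (n : ℕ) :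
    ∑ k ∈ range (n + 1), ρ k + ∑ k ∈ range n, κ k =
      ∑ k ∈ range n, μ k + ∑ k ∈ range n, ν k + max (μ n) (ν n) + m := by
  induction n with
  | zero => simp [h₀]
  | succ n ih =>
    rw [sum_range_succ] at ih
    simp only [sum_range_succ]
    have := h n
    lia

end IsLocalRule

/-- The inner corner that the local rule assigns to `μ`, `ν`, `ρ`. The subtraction is not truncated
when `μ ≺ ρ` and `ν ≺ ρ`. -/
def innerCorner (μ ν ρ : ℕ → ℕ) (k : ℕ) : ℕ :=
  min (μ k) (ν k) + max (μ (k + 1)) (ν (k + 1)) - ρ (k + 1)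

lemma isLocalRule_innerCorner {μ ν ρ : ℕ → ℕ} (hμ : Interlaces μ ρ) (hν : Interlaces ν ρ) :
    IsLocalRule (innerCorner μ ν ρ) μ ν ρ := fun k ↦ by
  have := hμ k
  have := hν k
  rw [innerCorner]
  lia

/-- The outer corner that the local rule assigns to `κ`, `μ`, `ν` and the free parameter `m`, the
excess of its first part over those of `μ` and `ν`. The subtraction is not truncated when `κ ≺ μ`
and `κ ≺ ν`. -/
def outerCorner (κ μ ν : ℕ → ℕ) (m : ℕ) : ℕ → ℕ
  | 0 => max (μ 0) (ν 0) + m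
  | k + 1 => min (μ k) (ν k) + max (μ (k + 1)) (ν (k + 1)) - κ k

lemma isLocalRule_outerCorner {κ μ ν : ℕ → ℕ} (hμ : Interlaces κ μ)
    (hν : Interlaces κ ν) (m : ℕ) : IsLocalRule κ μ ν (outerCorner κ μ ν m) := fun k ↦ by
  have := hμ k
  have := hν k
  rw [outerCorner]
  lia

lemma interlaces_outerCorner {κ μ ν : ℕ → ℕ} (hμ : Interlaces κ μ) (hν : Interlaces κ ν) (m : ℕ) :
    Interlaces μ (outerCorner κ μ ν m) ∧ Interlaces ν (outerCorner κ μ ν m) :=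
  have h := isLocalRule_outerCorner hμ hν m
  ⟨h.interlaces_outer hμ hν ((le_max_left _ _).trans (Nat.le_add_right _ _)),
    h.symm.interlaces_outer hν hμ ((le_max_right _ _).trans (Nat.le_add_right _ _))⟩

theorem reverse_grid_induction {P : ℕ → ℕ → Prop} (N : ℕ) (base : ∀ s t, N ≤ s ∨ N ≤ t → P s t)
    (step : ∀ s t, P (s + 1) (t + 1) → P (s + 1) t → P s (t + 1) → P s t) (s t : ℕ) : P s t :=
  if h : N ≤ s ∨ N ≤ t then base s t h
  else step s t (reverse_grid_induction N base step _ _) (reverse_grid_induction N base step _ _)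
    (reverse_grid_induction N base step _ _)
termination_by (N - s) + (N - t)

theorem edge_induction {L R : ℕ → ℕ → Prop} (left : ∀ s, L s 0) (right : ∀ t, R 0 t)
    (step : ∀ s t, L s t → R s t → L s (t + 1) ∧ R (s + 1) t) (s t : ℕ) : L s t ∧ R s t := by
  have row (s : ℕ) (hR : ∀ t, R s t) (t : ℕ) : L s t := by
    induction t with
    | zero => exact left s
    | succ t ih => exact (step s t ih (hR t)).1
  have hR (s : ℕ) : ∀ t, R s t := by
    induction s with
    | zero => exact right
    | succ s ih => exact fun t ↦ (step s t (row s ih t) (ih t)).2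
  exact ⟨row s (hR s) t, hR s t⟩

lemma exists_notMem_of_finite {S : Set (ℕ × ℕ)} (hS : S.Finite) :
    ∃ N, ∀ i j, N ≤ i ∨ N ≤ j → (i, j) ∉ S := by
  obtain ⟨⟨A, B⟩, hAB⟩ := hS.bddAbove
  refine ⟨max A B + 1, fun i j h hmem ↦ ?_⟩
  have hij : (i, j) ≤ (A, B) := hAB hmem
  rw [Prod.mk_le_mk] at hij
  lia

/-- A quarter-plane array of partitions that interlace along rows and columns, satisfy the local
rule on every `2 × 2` block and vanish outside some finite square. -/
@[ext]
structure GrowthDiagram where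
  shape : ℕ → ℕ → ℕ → ℕ
  interlaces_left : ∀ s t, Interlaces (shape (s + 1) t) (shape s t)
  interlaces_right : ∀ s t, Interlaces (shape s (t + 1)) (shape s t)
  isLocalRule : ∀ s t,
    IsLocalRule (shape (s + 1) (t + 1)) (shape (s + 1) t) (shape s (t + 1)) (shape s t)
  exists_bound : ∃ N, ∀ s t, N ≤ s ∨ N ≤ t → shape s t = 0

namespace GrowthDiagram

section Content

variable (D : GrowthDiagram)

/-- The side of a square outside which all partitions of the diagram vanish. -/
noncomputable def bound : ℕ := D.exists_bound.choose

lemma shape_le_shape_add_left (s t k : ℕ) : D.shape s t k ≤ D.shape (s + k) t 0 := by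
  induction k generalizing s with
  | zero => rfl
  | succ k ih =>
    calc D.shape s t (k + 1) ≤ D.shape (s + 1) t k := (D.interlaces_left s t k).2
      _ ≤ D.shape (s + 1 + k) t 0 := ih (s + 1)
      _ = D.shape (s + (k + 1)) t 0 := by rw [add_assoc, add_comm 1]

lemma shape_le_shape_add_right (s t k : ℕ) : D.shape s t k ≤ D.shape s (t + k) 0 := by
  induction k generalizing t with
  | zero => rfl
  | succ k ih =>
    calc D.shape s t (k + 1) ≤ D.shape s (t + 1) k := (D.interlaces_right s t k).2
      _ ≤ D.shape s (t + 1 + k) 0 := ih (t + 1)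
      _ = D.shape s (t + (k + 1)) 0 := by rw [add_assoc, add_comm 1]

lemma shape_eq_zero {s t k : ℕ} (h : D.bound ≤ s + k ∨ D.bound ≤ t + k) :
    D.shape s t k = 0 := by
  have hN := D.exists_bound.choose_spec
  rcases h with h | h
  · simpa [hN _ _ (.inl h)] using D.shape_le_shape_add_left s t k
  · simpa [hN _ _ (.inr h)] using D.shape_le_shape_add_right s t k

/-- The matrix of excesses `ρ 0 - max (μ 0) (ν 0)` of the `2 × 2` blocks of the diagram. The
subtraction is not truncated, by interlacing. -/
noncomputable def content : ℕ × ℕ →₀ ℕ :=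
  .onFinset (range D.bound ×ˢ range D.bound)
    (fun p ↦ D.shape p.1 p.2 0 - max (D.shape (p.1 + 1) p.2 0) (D.shape p.1 (p.2 + 1) 0)) <| by
    rintro ⟨s, t⟩ h
    contrapose! h
    rw [D.shape_eq_zero (by simp only [mem_product, mem_range] at h; lia), Nat.zero_sub]

lemma shape_zero_eq (s t : ℕ) :
    D.shape s t 0 = max (D.shape (s + 1) t 0) (D.shape s (t + 1) 0) + D.content (s, t) := by
  have hleft := (D.interlaces_left s t 0).1
  have hright := (D.interlaces_right s t 0).1
  rw [content, Finsupp.onFinset_apply]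
  lia

lemma shape_eq_outerCorner (s t : ℕ) :
    D.shape s t = outerCorner (D.shape (s + 1) (t + 1)) (D.shape (s + 1) t) (D.shape s (t + 1))
      (D.content (s, t)) := by
  funext k
  cases k with
  | zero => exact D.shape_zero_eq s t
  | succ k =>
    rw [outerCorner, ← D.isLocalRule s t k, Nat.add_sub_cancel]

lemma shape_succ_succ_eq_innerCorner (s t : ℕ) :
    D.shape (s + 1) (t + 1) =
      innerCorner (D.shape (s + 1) t) (D.shape s (t + 1)) (D.shape s t) := by
  funext k
  rw [innerCorner, ← D.isLocalRule s t k, Nat.add_sub_cancel_left]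

end Content

lemma content_injective : Function.Injective content := fun D E h ↦ by
  ext1
  funext s t
  induction s, t using reverse_grid_induction (N := max D.bound E.bound) with
  | base s t hst =>
    funext k
    rw [D.shape_eq_zero (by lia), E.shape_eq_zero (by lia)]
  | step s t hinner hleft hright =>
    rw [D.shape_eq_outerCorner, E.shape_eq_outerCorner s t, h, hinner, hleft, hright]

section OfContent

variable (m : ℕ × ℕ → ℕ) (N : ℕ)

/-- The array built from an `ℕ`-matrix `m` supported on `[0, N)²` by outer corners, starting from
empty partitions outside that square. -/
def shapeOfContent (s t : ℕ) : ℕ → ℕ :=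
  if N ≤ s ∨ N ≤ t then 0
  else outerCorner (shapeOfContent (s + 1) (t + 1)) (shapeOfContent (s + 1) t)
    (shapeOfContent s (t + 1)) (m (s, t))
termination_by (N - s) + (N - t)

variable {m N}

lemma shapeOfContent_eq_zero {s t : ℕ} (h : N ≤ s ∨ N ≤ t) : shapeOfContent m N s t = 0 := by
  rw [shapeOfContent, if_pos h]

lemma shapeOfContent_eq_outerCorner (hm : ∀ s t, N ≤ s ∨ N ≤ t → m (s, t) = 0) (s t : ℕ) :
    shapeOfContent m N s t = outerCorner (shapeOfContent m N (s + 1) (t + 1))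
      (shapeOfContent m N (s + 1) t) (shapeOfContent m N s (t + 1)) (m (s, t)) := by
  by_cases h : N ≤ s ∨ N ≤ t
  · iterate 4 rw [shapeOfContent_eq_zero (by lia)]
    funext k
    cases k <;> simp [outerCorner, hm s t h]
  · rw [shapeOfContent, if_neg h]

lemma interlaces_shapeOfContent (hm : ∀ s t, N ≤ s ∨ N ≤ t → m (s, t) = 0) (s t : ℕ) :
    Interlaces (shapeOfContent m N (s + 1) t) (shapeOfContent m N s t) ∧
      Interlaces (shapeOfContent m N s (t + 1)) (shapeOfContent m N s t) := by
  induction s, t using reverse_grid_induction (N := N) with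
  | base s t h =>
    iterate 3 rw [shapeOfContent_eq_zero (by lia)]
    exact ⟨fun _ ↦ ⟨le_rfl, le_rfl⟩, fun _ ↦ ⟨le_rfl, le_rfl⟩⟩
  | step s t _ hleft hright =>
    rw [shapeOfContent_eq_outerCorner hm s t]
    exact interlaces_outerCorner hleft.2 hright.1 _

/-- The growth diagram whose content is a given matrix supported on `[0, N)²`. -/
def ofContent (hm : ∀ s t, N ≤ s ∨ N ≤ t → m (s, t) = 0) : GrowthDiagram where
  shape := shapeOfContent m N
  interlaces_left s t := (interlaces_shapeOfContent hm s t).1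
  interlaces_right s t := (interlaces_shapeOfContent hm s t).2
  isLocalRule s t := by
    rw [shapeOfContent_eq_outerCorner hm s t]
    exact isLocalRule_outerCorner (interlaces_shapeOfContent hm _ _).2
      (interlaces_shapeOfContent hm _ _).1 _
  exists_bound := ⟨N, fun _ _ ↦ shapeOfContent_eq_zero⟩

lemma content_ofContent (hm : ∀ s t, N ≤ s ∨ N ≤ t → m (s, t) = 0) (p : ℕ × ℕ) :
    (ofContent hm).content p = m p := by
  obtain ⟨s, t⟩ := p
  have h : (ofContent hm).shape s t 0 = max ((ofContent hm).shape (s + 1) t 0)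
      ((ofContent hm).shape s (t + 1) 0) + m (s, t) :=
    congrFun (shapeOfContent_eq_outerCorner hm s t) 0
  rw [shape_zero_eq] at h
  exact Nat.add_left_cancel h

end OfContent

lemma content_surjective : Function.Surjective content := fun m ↦ by
  obtain ⟨N, hN⟩ := exists_notMem_of_finite m.support.finite_toSet
  have hm (s t : ℕ) (h : N ≤ s ∨ N ≤ t) : m (s, t) = 0 := Finsupp.notMem_support_iff.mp (hN s t h)
  exact ⟨ofContent hm, Finsupp.ext (content_ofContent hm)⟩

lemma content_bijective : Function.Bijective content :=
  ⟨content_injective, content_surjective⟩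

/-- The plane partition with diagonals `shape s 0` and `shape 0 t`. One of the truncated differences
`i - j`, `j - i` is `0`, and the other is the distance of `(i, j)` from the main diagonal. -/
def planePartition (D : GrowthDiagram) : PlanePartitionFn where
  part i j := D.shape (i - j) (j - i) (min i j)
  decr_left i j := by
    rcases lt_or_ge i j with h | h
    · rw [show i + 1 - j = i - j by lia, show j - i = j - (i + 1) + 1 by lia,
        show min (i + 1) j = min i j + 1 by lia]
      exact (D.interlaces_right _ _ _).2
    · rw [Nat.sub_add_comm h, show j - (i + 1) = j - i by lia,
        show min (i + 1) j = min i j by lia]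
      exact (D.interlaces_left _ _ _).1
  decr_right i j := by
    rcases lt_or_ge j i with h | h
    · rw [show j + 1 - i = j - i by lia, show i - j = i - (j + 1) + 1 by lia,
        show min i (j + 1) = min i j + 1 by lia]
      exact (D.interlaces_left _ _ _).2
    · rw [Nat.sub_add_comm h, show i - (j + 1) = i - j by lia,
        show min i (j + 1) = min i j by lia]
      exact (D.interlaces_right _ _ _).1
  finite_supp := by
    refine (range D.bound ×ˢ range D.bound).finite_toSet.subset fun p hp ↦ ?_
    contrapose! hp
    exact not_not.mpr (D.shape_eq_zero (by simp only [mem_coe, mem_product, mem_range] at hp; lia))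

variable (D : GrowthDiagram)

lemma planePartition_part_eq_zero {i j : ℕ} (h : D.bound ≤ i ∨ D.bound ≤ j) :
    D.planePartition.part i j = 0 :=
  D.shape_eq_zero (by lia)

lemma planePartition_part_add_right (t k : ℕ) :
    D.planePartition.part k (k + t) = D.shape 0 t k := by
  simp [planePartition]

lemma planePartition_part_add_left (s k : ℕ) :
    D.planePartition.part (k + s) k = D.shape s 0 k := by
  simp [planePartition]

lemma planePartition_injective : Function.Injective planePartition := fun D E h ↦ by
  ext1
  have hright (t : ℕ) : D.shape 0 t = E.shape 0 t := by
    funext k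
    rw [← planePartition_part_add_right, h, planePartition_part_add_right]
  have hleft (s : ℕ) : D.shape s 0 = E.shape s 0 := by
    funext k
    rw [← planePartition_part_add_left, h, planePartition_part_add_left]
  funext s t
  induction s generalizing t with
  | zero => exact hright t
  | succ s ihs =>
    induction t with
    | zero => exact hleft (s + 1)
    | succ t iht =>
      rw [shape_succ_succ_eq_innerCorner, shape_succ_succ_eq_innerCorner, ihs, ihs, iht]

end GrowthDiagram

namespace PlanePartitionFn

attribute [ext] PlanePartitionFn

variable (π : PlanePartitionFn)

/-- The array with boundary the diagonals of `π`, filled in by inner corners. -/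
def growthShape : ℕ → ℕ → ℕ → ℕ
  | 0, t => fun k ↦ π.part k (k + t)
  | s + 1, 0 => fun k ↦ π.part (k + (s + 1)) k
  | s + 1, t + 1 => innerCorner (growthShape (s + 1) t) (growthShape s (t + 1)) (growthShape s t)

lemma growthShape_zero_left (t k : ℕ) : π.growthShape 0 t k = π.part k (k + t) := by
  rw [growthShape]

lemma growthShape_zero_right (s k : ℕ) : π.growthShape s 0 k = π.part (k + s) k := by
  cases s <;> simp [growthShape]

lemma interlaces_growthShape (s t : ℕ) :
    Interlaces (π.growthShape (s + 1) t) (π.growthShape s t) ∧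
      Interlaces (π.growthShape s (t + 1)) (π.growthShape s t) := by
  refine edge_induction (L := fun s t ↦ Interlaces (π.growthShape (s + 1) t) _)
    (R := fun s t ↦ Interlaces (π.growthShape s (t + 1)) _)
    (fun s k ↦ ?_) (fun t k ↦ ?_) (fun s t hleft hright ↦ ?_) s t
  · simp only [growthShape_zero_right, ← add_assoc]
    exact ⟨π.decr_left _ _, by simpa only [add_right_comm] using π.decr_right (k + 1 + s) k⟩
  · simp only [growthShape_zero_left, ← add_assoc]
    exact ⟨π.decr_right _ _, by simpa only [add_right_comm] using π.decr_left k (k + 1 + t)⟩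
  · have h := isLocalRule_innerCorner hleft hright
    rw [growthShape]
    exact ⟨h.symm.interlaces_inner hright hleft, h.interlaces_inner hleft hright⟩

lemma growthShape_le_part_right (s t k : ℕ) : π.growthShape s t k ≤ π.part k (k + t) := by
  induction s with
  | zero => rw [growthShape_zero_left]
  | succ s ih => exact ((π.interlaces_growthShape s t).1 k).1.trans ih

lemma growthShape_le_part_left (s t k : ℕ) : π.growthShape s t k ≤ π.part (k + s) k := by
  induction t with
  | zero => rw [growthShape_zero_right]
  | succ t ih => exact ((π.interlaces_growthShape s t).2 k).1.trans ih

/-- The growth diagram whose boundary partitions are the diagonals of `π`. -/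
def growthDiagram : GrowthDiagram where
  shape := π.growthShape
  interlaces_left s t := (π.interlaces_growthShape s t).1
  interlaces_right s t := (π.interlaces_growthShape s t).2
  isLocalRule s t := by
    rw [growthShape]
    exact isLocalRule_innerCorner (π.interlaces_growthShape s t).1 (π.interlaces_growthShape s t).2
  exists_bound := by
    obtain ⟨N, hN⟩ := exists_notMem_of_finite π.finite_supp
    have hpart (i j : ℕ) (h : N ≤ i ∨ N ≤ j) : π.part i j = 0 := not_not.mp (hN i j h)
    refine ⟨N, fun s t h ↦ funext fun k ↦ Nat.le_zero.mp ?_⟩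
    rcases h with h | h
    · exact (π.growthShape_le_part_left s t k).trans (hpart _ _ (by lia)).le
    · exact (π.growthShape_le_part_right s t k).trans (hpart _ _ (by lia)).le

lemma planePartition_growthDiagram : π.growthDiagram.planePartition = π := by
  ext i j
  rcases le_total i j with h | h <;> obtain ⟨d, rfl⟩ := Nat.exists_eq_add_of_le h
  · exact (π.growthDiagram.planePartition_part_add_right d i).trans (π.growthShape_zero_left d i)
  · exact (π.growthDiagram.planePartition_part_add_left d j).trans (π.growthShape_zero_right d j)

/-- The decomposition of the quarter plane into diagonals: `inl (t, k)` is the `k`-th cell of the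
`t`-th diagonal weakly to the right of the main one, and `inr (s, k)` the `k`-th cell of the
`(s + 1)`-st diagonal below it. -/
def diagonalEquiv : (ℕ × ℕ) ⊕ (ℕ × ℕ) ≃ ℕ × ℕ where
  toFun := Sum.elim (fun x ↦ (x.2, x.2 + x.1)) (fun x ↦ (x.2 + (x.1 + 1), x.2))
  invFun p := if p.1 ≤ p.2 then .inl (p.2 - p.1, p.1) else .inr (p.1 - p.2 - 1, p.2)
  left_inv := by rintro (⟨t, k⟩ | ⟨s, k⟩) <;> simp
  right_inv := by
    rintro ⟨i, j⟩
    dsimp only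
    split_ifs with h <;> simp only [Sum.elim_inl, Sum.elim_inr, Prod.mk.injEq] <;> lia

lemma size_eq_sum_diagonals {N : ℕ} (hN : ∀ i j, N ≤ i ∨ N ≤ j → π.part i j = 0) :
    π.size = ∑ t ∈ range N, ∑ k ∈ range N, π.part k (k + t) +
      ∑ s ∈ range N, ∑ k ∈ range N, π.part (k + (s + 1)) k := by
  set f : ℕ × ℕ → ℕ := fun p ↦ π.part p.1 p.2
  have hsupport : Function.support (f ∘ diagonalEquiv) ⊆
      ↑((range N ×ˢ range N).disjSum (range N ×ˢ range N)) := by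
    rintro (⟨d, k⟩ | ⟨d, k⟩) h <;> contrapose! h <;> refine not_not.mpr (hN _ _ ?_) <;>
      simp only [mem_coe, inl_mem_disjSum, inr_mem_disjSum, mem_product, mem_range, diagonalEquiv,
        Equiv.coe_fn_mk, Sum.elim_inl, Sum.elim_inr] at h ⊢ <;>
      lia
  calc π.size = ∑ᶠ p, f p := (finsum_eq_sum f π.finite_supp).symm
    _ = ∑ᶠ x, (f ∘ diagonalEquiv) x := (finsum_comp_equiv diagonalEquiv).symm
    _ = _ := by
      rw [finsum_eq_sum_of_support_subset _ hsupport, sum_disjSum, sum_product, sum_product]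
      rfl

end PlanePartitionFn

section Summation

variable {M : Type*} [AddCommGroup M]

lemma sum_range_nsmul_sub (f : ℕ → M) (n : ℕ) :
    ∑ i ∈ range n, i • (f i - f (i + 1)) = ∑ i ∈ range n, f (i + 1) - n • f n := by
  induction n with
  | zero => simp
  | succ n ih => rw [sum_range_succ, sum_range_succ, ih]; module

lemma sum_range_succ_nsmul_sub (f : ℕ → M) (n : ℕ) :
    ∑ i ∈ range n, (i + 1) • (f i - f (i + 1)) = ∑ i ∈ range n, f i - n • f n := by
  induction n with
  | zero => simp
  | succ n ih => rw [sum_range_succ, sum_range_succ, ih]; module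

lemma sum_range_hook_nsmul_sub {f : ℕ → ℕ → M} {n : ℕ} (hf : ∀ s t, n ≤ s ∨ n ≤ t → f s t = 0) :
    ∑ s ∈ range n, ∑ t ∈ range n,
        (s + t + 1) • (f s t - f (s + 1) t - (f s (t + 1) - f (s + 1) (t + 1))) =
      ∑ t ∈ range n, f 0 t + ∑ s ∈ range n, f (s + 1) 0 := by
  set c : ℕ → ℕ → M := fun s t ↦ f s t - f (s + 1) t - (f s (t + 1) - f (s + 1) (t + 1))
  have hrow (s : ℕ) : ∑ t ∈ range n, (t + 1) • c s t =
      ∑ t ∈ range n, f s t - ∑ t ∈ range n, f (s + 1) t := by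
    rw [sum_range_succ_nsmul_sub (fun t ↦ f s t - f (s + 1) t), sum_sub_distrib,
      hf s n (by lia), hf (s + 1) n (by lia), sub_zero, smul_zero, sub_zero]
  have hrow' (s : ℕ) : ∑ t ∈ range n, c s t = f s 0 - f (s + 1) 0 := by
    rw [sum_range_sub' (fun t ↦ f s t - f (s + 1) t), hf s n (by lia), hf (s + 1) n (by lia),
      sub_zero, sub_zero]
  calc ∑ s ∈ range n, ∑ t ∈ range n, (s + t + 1) • c s t
    _ = ∑ s ∈ range n, (∑ t ∈ range n, (t + 1) • c s t + s • ∑ t ∈ range n, c s t) := by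
      refine sum_congr rfl fun s _ ↦ ?_
      rw [smul_sum, ← sum_add_distrib]
      exact sum_congr rfl fun t _ ↦ by module
    _ = ∑ t ∈ range n, f 0 t + ∑ s ∈ range n, f (s + 1) 0 := by
      simp only [hrow, hrow', sum_add_distrib]
      rw [sum_range_sub' (fun s ↦ ∑ t ∈ range n, f s t), sum_range_nsmul_sub (fun s ↦ f s 0),
        sum_eq_zero fun t _ ↦ hf n t (by lia), hf n 0 (by lia), smul_zero, sub_zero, sub_zero]

end Summation

namespace GrowthDiagram

lemma planePartition_bijective : Function.Bijective planePartition :=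
  ⟨planePartition_injective, fun π ↦ ⟨_, π.planePartition_growthDiagram⟩⟩

variable (D : GrowthDiagram)

lemma sum_shape_add_sum_shape_succ_succ (s t : ℕ) :
    ∑ k ∈ range D.bound, D.shape s t k + ∑ k ∈ range D.bound, D.shape (s + 1) (t + 1) k =
      ∑ k ∈ range D.bound, D.shape (s + 1) t k + ∑ k ∈ range D.bound, D.shape s (t + 1) k +
        D.content (s, t) := by
  have h := (D.isLocalRule s t).sum_range (D.shape_zero_eq s t) D.bound
  rwa [sum_range_succ, D.shape_eq_zero (by lia), D.shape_eq_zero (by lia),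
    D.shape_eq_zero (by lia), max_self, add_zero, add_zero] at h

lemma weight_content : Finsupp.weight (fun p ↦ p.1 + p.2 + 1) D.content =
    ∑ s ∈ range D.bound, ∑ t ∈ range D.bound, (s + t + 1) * D.content (s, t) := by
  have hsupport : D.content.support ⊆ range D.bound ×ˢ range D.bound :=
    Finsupp.support_onFinset_subset
  rw [Finsupp.weight_apply, Finsupp.sum_of_support_subset _ hsupport _ (by simp), sum_product]
  simp only [smul_eq_mul, mul_comm]

theorem size_planePartition :
    D.planePartition.size = Finsupp.weight (fun p ↦ p.1 + p.2 + 1) D.content := by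
  set S : ℕ → ℕ → ℤ := fun s t ↦ ↑(∑ k ∈ range D.bound, D.shape s t k) with hS
  have hS₀ (s t : ℕ) (h : D.bound ≤ s ∨ D.bound ≤ t) : S s t = 0 :=
    Nat.cast_eq_zero.mpr (sum_eq_zero fun k _ ↦ D.shape_eq_zero (by lia))
  have hcontent (s t : ℕ) :
      (D.content (s, t) : ℤ) = S s t - S (s + 1) t - (S s (t + 1) - S (s + 1) (t + 1)) := by
    have := D.sum_shape_add_sum_shape_succ_succ s t
    lia
  rw [D.planePartition.size_eq_sum_diagonals fun i j ↦ D.planePartition_part_eq_zero,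
    weight_content]
  simp only [planePartition_part_add_right, planePartition_part_add_left]
  have h := sum_range_hook_nsmul_sub hS₀
  zify
  simp only [← hcontent, nsmul_eq_mul] at h
  push_cast [hS] at h
  exact h.symm

end GrowthDiagram

theorem exists_equiv_size_eq_weight : ∃ e : PlanePartitionFn ≃ (ℕ × ℕ →₀ ℕ),
    ∀ π, π.size = Finsupp.weight (fun p ↦ p.1 + p.2 + 1) (e π) := by
  let boundary := Equiv.ofBijective _ GrowthDiagram.planePartition_bijective
  let content := Equiv.ofBijective _ GrowthDiagram.content_bijective
  refine ⟨boundary.symm.trans content, fun π ↦ ?_⟩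
  obtain ⟨D, rfl⟩ := boundary.surjective π
  rw [Equiv.trans_apply, Equiv.symm_apply_apply]
  exact D.size_planePartition

section Weight

variable {ι : Type*} {w : ι → ℕ}

lemma smul_injective_of_ne_zero (hw : ∀ i, w i ≠ 0) :
    Function.Injective (w • · : (ι →₀ ℕ) → ι →₀ ℕ) := fun _ _ h ↦
  Finsupp.ext fun i ↦ Nat.eq_of_mul_eq_mul_left (Nat.pos_of_ne_zero (hw i)) (DFunLike.congr_fun h i)

variable (w) in
lemma sum_smul_eq_weight (m : ι →₀ ℕ) : (w • m).sum (fun _ x ↦ x) = Finsupp.weight w m := by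
  rw [Finsupp.sum_of_support_subset (w • m) (s := m.support)
    (fun i hi ↦ by contrapose! hi; simp_all) _ (by simp), Finsupp.weight_apply]
  exact sum_congr rfl fun i _ ↦ mul_comm _ _

lemma image_smul_weight_eq [DecidableEq ι] {s : Finset ι} {n : ℕ} (hs : ∀ i, w i ≤ n → i ∈ s) :
    (w • · : (ι →₀ ℕ) → ι →₀ ℕ) '' {m | Finsupp.weight w m = n} =
      ↑{l ∈ finsuppAntidiag s n | ∀ i ∈ s, w i ∣ l i} := by
  ext l
  simp only [Set.mem_image, Set.mem_ofPred_eq, coe_filter, mem_finsuppAntidiag']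
  constructor
  · rintro ⟨m, rfl, rfl⟩
    refine ⟨⟨sum_smul_eq_weight w m, fun i hi ↦ hs i ?_⟩, fun i _ ↦ dvd_mul_right _ _⟩
    exact Finsupp.le_weight_of_ne_zero' w fun h ↦ by simp [h] at hi
  · rintro ⟨⟨rfl, hsupport⟩, hdvd⟩
    let m : ι →₀ ℕ := .onFinset l.support (fun i ↦ l i / w i) fun i h ↦ by
      contrapose! h
      simp_all
    have hm : w • m = l := Finsupp.ext fun i ↦ by
      by_cases hi : i ∈ l.support
      · exact Nat.mul_div_cancel' (hdvd i (hsupport hi))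
      · simp [m, Finsupp.notMem_support_iff.mp hi]
    exact ⟨m, by rw [← sum_smul_eq_weight, hm], hm⟩

lemma finite_weight_eq (hw : ∀ i, w i ≠ 0) {s : Finset ι} {n : ℕ}
    (hs : ∀ i, w i ≤ n → i ∈ s) : {m : ι →₀ ℕ | Finsupp.weight w m = n}.Finite := by
  classical
  refine .of_finite_image ?_ (smul_injective_of_ne_zero hw).injOn
  rw [image_smul_weight_eq hs]
  exact finite_toSet _

end Weight

section GeneratingFunction

variable {k : Type*} [Field k]

lemma coeff_inv_one_sub_X_pow {w : ℕ} (hw : w ≠ 0) (n : ℕ) :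
    coeff n ((1 - X ^ w : k⟦X⟧)⁻¹) = if w ∣ n then 1 else 0 := by
  suffices (PowerSeries.mk fun n ↦ if w ∣ n then 1 else 0 : k⟦X⟧) = (1 - X ^ w)⁻¹ by
    rw [← this, coeff_mk]
  rw [PowerSeries.eq_inv_iff_mul_eq_one (by simp [hw])]
  ext n
  rw [mul_sub, mul_one, map_sub, coeff_mul_X_pow', coeff_mk, coeff_mk, coeff_one]
  rcases lt_or_ge n w with h | h
  · have : w ∣ n ↔ n = 0 := ⟨fun hd ↦ Nat.eq_zero_of_dvd_of_lt hd h, fun h0 ↦ h0 ▸ dvd_zero w⟩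
    simp [this, h.not_ge]
  · simp [Nat.dvd_sub_iff_left h dvd_rfl, h, show n ≠ 0 by lia]

lemma coeff_prod_inv_one_sub_X_pow {ι : Type*} {w : ι → ℕ} (hw : ∀ i, w i ≠ 0) {s : Finset ι}
    {n : ℕ} (hs : ∀ i, w i ≤ n → i ∈ s) :
    coeff n (∏ i ∈ s, (1 - X ^ w i : k⟦X⟧)⁻¹) =
      ({m : ι →₀ ℕ | Finsupp.weight w m = n}.ncard : k) := by
  classical
  rw [PowerSeries.coeff_prod, ← Set.ncard_image_of_injective _ (smul_injective_of_ne_zero hw),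
    image_smul_weight_eq hs, Set.ncard_coe_finset]
  simp only [coeff_inv_one_sub_X_pow (hw _), prod_boole, sum_boole]

lemma prod_biUnion_antidiagonal {M : Type*} [CommMonoid M] (f : ℕ → M) (s : Finset ℕ) :
    ∏ p ∈ s.biUnion antidiagonal, f (p.1 + p.2) = ∏ n ∈ s, f n ^ (n + 1) := by
  have hdisjoint : (s : Set ℕ).PairwiseDisjoint antidiagonal := fun a _ b _ hab ↦
    disjoint_left.mpr fun p ha hb ↦
      hab ((mem_antidiagonal.mp ha).symm.trans (mem_antidiagonal.mp hb))
  rw [prod_biUnion hdisjoint]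
  refine prod_congr rfl fun n _ ↦ ?_
  rw [prod_congr rfl fun p hp ↦ congrArg f (mem_antidiagonal.mp hp), prod_const,
    Nat.card_antidiagonal]

open Filter
open scoped PowerSeries.WithPiTopology

variable [TopologicalSpace k]

lemma tendsto_of_eventually_coeff_eq {α : Type*} {l : Filter α} {f : α → k⟦X⟧} {g : k⟦X⟧}
    (h : ∀ n, ∀ᶠ a in l, coeff n (f a) = coeff n g) : Tendsto f l (nhds g) :=
  (WithPiTopology.tendsto_iff_coeff_tendsto k f l g).mpr fun n ↦ tendsto_nhds_of_eventually_eq (h n)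

lemma hasSum_X_pow {α : Type*} {f : α → ℕ} (hf : ∀ n, {a | f a = n}.Finite) :
    HasSum (fun a ↦ (X : k⟦X⟧) ^ f a) (.mk fun n ↦ ({a | f a = n}.ncard : k)) := by
  classical
  refine tendsto_of_eventually_coeff_eq fun n ↦ ?_
  simp only [SummationFilter.unconditional_filter]
  filter_upwards [eventually_ge_atTop (hf n).toFinset] with s hs
  have hfibre : {a ∈ s | n = f a} = (hf n).toFinset := by
    ext a
    simpa [eq_comm] using fun h : f a = n ↦ hs ((hf n).mem_toFinset.mpr h)
  simp only [map_sum, coeff_X_pow, coeff_mk, sum_boole, hfibre, Set.ncard_eq_toFinset_card _ (hf n)]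

lemma finite_weight_add_add_one_eq (n : ℕ) :
    {m : ℕ × ℕ →₀ ℕ | Finsupp.weight (fun p ↦ p.1 + p.2 + 1) m = n}.Finite :=
  finite_weight_eq (s := range n ×ˢ range n) (fun _ ↦ Nat.succ_ne_zero _) fun p hp ↦ by
    simp only [mem_product, mem_range]
    lia

lemma hasProd_inv_one_sub_X_pow_succ :
    HasProd (fun n : ℕ ↦ ((1 - (X : k⟦X⟧) ^ (n + 1))⁻¹) ^ (n + 1))
      (.mk fun n ↦
        ({m : ℕ × ℕ →₀ ℕ | Finsupp.weight (fun p ↦ p.1 + p.2 + 1) m = n}.ncard : k)) := by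
  refine tendsto_of_eventually_coeff_eq fun n ↦ ?_
  simp only [SummationFilter.unconditional_filter]
  filter_upwards [eventually_ge_atTop (range n)] with s hs
  rw [← prod_biUnion_antidiagonal (fun n ↦ (1 - (X : k⟦X⟧) ^ (n + 1))⁻¹), coeff_mk]
  refine coeff_prod_inv_one_sub_X_pow (fun _ ↦ Nat.succ_ne_zero _) fun p hp ↦ ?_
  exact mem_biUnion.mpr ⟨p.1 + p.2, hs (mem_range.mpr hp), mem_antidiagonal.mpr rfl⟩

theorem macmahon_plane_partition_generating_function_general (k : Type*) [Field k]
    [TopologicalSpace k] [T2Space k] :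
    ∑' π : PlanePartitionFn, (X : k⟦X⟧) ^ π.size =
      ∏' n : ℕ, ((1 - (X : k⟦X⟧) ^ (n + 1))⁻¹) ^ (n + 1) := by
  obtain ⟨e, he⟩ := exists_equiv_size_eq_weight
  calc ∑' π : PlanePartitionFn, (X : k⟦X⟧) ^ π.size
    _ = ∑' m : ℕ × ℕ →₀ ℕ, (X : k⟦X⟧) ^ Finsupp.weight (fun p : ℕ × ℕ ↦ p.1 + p.2 + 1) m := by
      simp_rw [he]
      exact e.tsum_eq fun m ↦ (X : k⟦X⟧) ^ Finsupp.weight _ m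
    _ = .mk fun n ↦
        ({m : ℕ × ℕ →₀ ℕ | Finsupp.weight (fun p ↦ p.1 + p.2 + 1) m = n}.ncard : k) :=
      (hasSum_X_pow finite_weight_add_add_one_eq).tsum_eq
    _ = ∏' n : ℕ, ((1 - (X : k⟦X⟧) ^ (n + 1))⁻¹) ^ (n + 1) :=
      hasProd_inv_one_sub_X_pow_succ.tprod_eq.symm

end GeneratingFunction

/-- MacMahon's formula: the generating function of plane partitions
equals the MacMahon product, `Σ_π q^{|π|} = ∏_{n=1}^∞ (1 − q^n)^{−n}`, as formal power
series in `q` over `ℚ`. -/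
theorem macmahon_plane_partition_generating_function :
    (∑' π : PlanePartitionFn, (PowerSeries.X : PowerSeries ℚ) ^ π.size) =
      ∏' n : ℕ, ((1 - (PowerSeries.X : PowerSeries ℚ) ^ (n + 1))⁻¹) ^ (n + 1) :=
  macmahon_plane_partition_generating_function_general ℚ
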